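/- Let n ≥ 2, let σ be the surface measure on the unit sphere S^{n-1} ⊂ ℝⁿ with N := σ(S^{n-1}), let c, c₁ : S^{n-1} → ℝ be continuous functions such that c satisfies the balance condition ∫_{S^{n-1}} c(w)·w dσ(w) = 0 (the vector-valued integral vanishes), and let φ : ℝⁿ → ℝ be three times continuously differentiable. Define φ₁(x,v) := −c(v)⟨v,∇φ(x)⟩ and φ₂(x,v) := c(v)²·D²φ(x)[v,v] − (1/N)∫_{S^{n-1}} c(w)²·D²φ(x)[w,w] dσ(w), and φ^ε := φ + εφ₁ + ε²φ₂. Then for all x ∈ ℝⁿ, v ∈ S^{n-1}, ε ≠ 0: ε⁻²[ (1/N)∫_{S^{n-1}} φ^ε(x,w)dσ(w) − φ^ε(x,v) ] − ε⁻¹ c(v)⟨v, ∇_xφ^ε(x,v)⟩ − c₁(v)⟨v, ∇_xφ^ε(x,v)⟩ = [ −c₁(v)⟨v,∇φ(x)⟩ + (1/N)∫_{S^{n-1}} c(w)² D²φ(x)[w,w] dσ(w) ] − ε·[ c(v)⟨v, ∇_xφ₂(x,v)⟩ − c₁(v)c(v)D²φ(x)[v,v] ] − ε²·c₁(v)⟨v,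 ∇_xφ₂(x,v)⟩. -/

import Mathlib

open MeasureTheory Real
open scoped InnerProductSpace

/-- Hessian quadratic form `D²φ(x)[v,v]`. -/
noncomputable def hessQF {n : ℕ} (φ : EuclideanSpace ℝ (Fin n) → ℝ)
    (x v : EuclideanSpace ℝ (Fin n)) : ℝ :=
  iteratedFDeriv ℝ 2 φ x ![v, v]

/-- Surface measure on spheres in `ℝⁿ`: the `(n−1)`-dimensional Hausdorff measure. -/
noncomputable def sphMeasure (n : ℕ) : Measure (EuclideanSpace ℝ (Fin n)) :=
  μH[(n : ℝ) - 1]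

/-- Total surface measure `N = σ(S^{n-1})` of the unit sphere. -/
noncomputable def sphN (n : ℕ) : ℝ :=
  (sphMeasure n (Metric.sphere (0 : EuclideanSpace ℝ (Fin n)) 1)).toReal

/-- First corrector `φ₁(x,v) = −c(v)⟨v,∇φ(x)⟩`. -/
noncomputable def phi1 {n : ℕ} (c : EuclideanSpace ℝ (Fin n) → ℝ)
    (φ : EuclideanSpace ℝ (Fin n) → ℝ) (x v : EuclideanSpace ℝ (Fin n)) : ℝ :=
  -(c v * ⟪v, gradient φ x⟫_ℝ)

/-- Second corrector
`φ₂(x,v) = c(v)²·D²φ(x)[v,v] − (1/N)∫_{S^{n-1}} c(w)²·D²φ(x)[w,w] dσ(w)`. -/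
noncomputable def phi2 {n : ℕ} (c : EuclideanSpace ℝ (Fin n) → ℝ)
    (φ : EuclideanSpace ℝ (Fin n) → ℝ) (x v : EuclideanSpace ℝ (Fin n)) : ℝ :=
  c v ^ 2 * hessQF φ x v -
    (1 / sphN n) * ∫ w in Metric.sphere (0 : EuclideanSpace ℝ (Fin n)) 1,
      c w ^ 2 * hessQF φ x w ∂(sphMeasure n)

/-- Perturbed test function `φ^ε = φ + εφ₁ + ε²φ₂`. -/
noncomputable def phiEpsN {n : ℕ} (c : EuclideanSpace ℝ (Fin n) → ℝ) (ε : ℝ)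
    (φ : EuclideanSpace ℝ (Fin n) → ℝ) (x v : EuclideanSpace ℝ (Fin n)) : ℝ :=
  φ x + ε * phi1 c φ x v + ε ^ 2 * phi2 c φ x v

lemma sph_finite (m : ℕ) :
    sphMeasure (m+1) (Metric.sphere (0 : EuclideanSpace ℝ (Fin (m+1))) 1) < ⊤ := by
  classical
  let g : Fin (m+1) × Bool → (Fin m → ℝ) → EuclideanSpace ℝ (Fin (m+1)) := fun p y =>
    WithLp.toLp 2 (p.1.insertNth (α := fun _ => ℝ) (if p.2 then (1:ℝ) else -1) y)
  let f : Fin (m+1) × Bool → (Fin m → ℝ) → EuclideanSpace ℝ (Fin (m+1)) := fun p y =>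
    (‖g p y‖)⁻¹ • g p y
  let C : Set (Fin m → ℝ) := Set.Icc (fun _ => -1) (fun _ => 1)
  have hgne : ∀ p y, g p y ≠ 0 := by
    intro p y h
    have := congrArg (fun z : EuclideanSpace ℝ (Fin (m+1)) => z p.1) h
    simp only [g, Fin.insertNth_apply_same, PiLp.zero_apply] at this
    split_ifs at this <;> norm_num at this
  have hg : ∀ p, ContDiff ℝ 1 (g p) := by
    intro p
    rw [contDiff_piLp]
    intro i
    simp only [g]
    rcases Fin.eq_self_or_eq_succAbove p.1 i with rfl | ⟨j, rfl⟩
    · simp only [Fin.insertNth_apply_same]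
      exact contDiff_const
    · simp only [Fin.insertNth_apply_succAbove]
      exact contDiff_apply ℝ ℝ j
  have hf : ∀ p, ContDiff ℝ 1 (f p) := by
    intro p
    exact (((hg p).norm ℝ (hgne p)).inv (fun y => norm_ne_zero_iff.2 (hgne p y))).smul (hg p)
  have hcov : Metric.sphere (0 : EuclideanSpace ℝ (Fin (m+1))) 1 ⊆ ⋃ p, f p '' C := by
    intro x hx
    have hx1 : ‖x‖ = 1 := by simpa using hx
    obtain ⟨i, -, hi⟩ := Finset.exists_max_image Finset.univ (fun i => |x i|) Finset.univ_nonempty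
    have hi0 : 0 < |x i| := by
      rcases (abs_nonneg (x i)).lt_or_eq with h | h
      · exact h
      · exfalso
        have : x = 0 := by
          ext j
          have := hi j (Finset.mem_univ j)
          rw [← h] at this
          simpa using this
        simp [this] at hx1
    refine Set.mem_iUnion.2 ⟨(i, decide (0 < x i)), fun j => |x i|⁻¹ * x (i.succAbove j), ?_, ?_⟩
    · have key : ∀ j, |(|x i|⁻¹ * x (i.succAbove j))| ≤ 1 := by
        intro j
        rw [abs_mul, abs_inv, abs_abs, inv_mul_le_iff₀ hi0, mul_one]
        exact hi _ (Finset.mem_univ _)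
      exact ⟨fun j => (abs_le.1 (key j)).1, fun j => (abs_le.1 (key j)).2⟩
    · have hgx : g (i, decide (0 < x i)) (fun j => |x i|⁻¹ * x (i.succAbove j)) = |x i|⁻¹ • x := by
        ext k
        simp only [g, PiLp.smul_apply, smul_eq_mul]
        rcases Fin.eq_self_or_eq_succAbove i k with rfl | ⟨j, rfl⟩
        · simp only [Fin.insertNth_apply_same, decide_eq_true_eq]
          split_ifs with h
          · rw [abs_of_pos h, inv_mul_cancel₀ h.ne']
          · have h' : x k < 0 := lt_of_le_of_ne (not_lt.1 h) (abs_pos.1 hi0)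
            rw [abs_of_neg h', inv_neg, neg_mul, inv_mul_cancel₀ h'.ne]
        · simp only [Fin.insertNth_apply_succAbove]
      simp only [f]
      rw [hgx, norm_smul, hx1, smul_smul]
      simp [hi0.ne']
  refine lt_of_le_of_lt (measure_mono hcov) ?_
  refine lt_of_le_of_lt (measure_iUnion_le _) ?_
  rw [tsum_fintype, ENNReal.sum_lt_top]
  intro p _
  obtain ⟨K, hK⟩ := (hf p).contDiffOn.exists_lipschitzOnWith (s := C) one_ne_zero (convex_Icc _ _)
    isCompact_Icc
  have hd : ((m+1 : ℕ) : ℝ) - 1 = (Fintype.card (Fin m) : ℝ) := by simp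
  unfold sphMeasure
  rw [hd]
  refine lt_of_le_of_lt (hK.hausdorffMeasure_image_le (by positivity)) ?_
  rw [hausdorffMeasure_pi_real]
  exact ENNReal.mul_lt_top (ENNReal.rpow_lt_top_of_nonneg (by positivity) ENNReal.coe_ne_top)
    isCompact_Icc.measure_lt_top

lemma sph_pos (m : ℕ) :
    0 < sphMeasure (m+1) (Metric.sphere (0 : EuclideanSpace ℝ (Fin (m+1))) 1) := by
  let P : EuclideanSpace ℝ (Fin (m+1)) → (Fin m → ℝ) := fun x j => x j.succ
  have hP : LipschitzWith 1 P := by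
    refine LipschitzWith.of_dist_le_mul fun x y => ?_
    rw [NNReal.coe_one, one_mul, dist_pi_le_iff dist_nonneg]
    intro j
    simp only [P]
    rw [dist_eq_norm, dist_eq_norm, ← PiLp.sub_apply]
    exact PiLp.norm_apply_le (x - y) j.succ
  let U : Set (Fin m → ℝ) := {y | ∑ j, y j ^ 2 < 1}
  have hU : IsOpen U := isOpen_lt (by fun_prop) continuous_const
  have hU0 : (0 : Fin m → ℝ) ∈ U := by simp [U]
  have hUpos : 0 < (volume : Measure (Fin m → ℝ)) U := hU.measure_pos _ ⟨0, hU0⟩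
  have hsub : U ⊆ P '' Metric.sphere (0 : EuclideanSpace ℝ (Fin (m+1))) 1 := by
    intro y hy
    have hy' : ∑ j, y j ^ 2 < 1 := hy
    refine ⟨WithLp.toLp 2 (Fin.cons (α := fun _ => ℝ) (√(1 - ∑ j, y j ^ 2)) y), ?_, ?_⟩
    · rw [mem_sphere_zero_iff_norm, EuclideanSpace.norm_eq, Fin.sum_univ_succ]
      simp only [Fin.cons_zero, Fin.cons_succ, Real.norm_eq_abs, sq_abs]
      rw [Real.sq_sqrt (by linarith)]
      simp
    · ext j
      simp [P]
  have hd : ((m+1 : ℕ) : ℝ) - 1 = (Fintype.card (Fin m) : ℝ) := by simp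
  unfold sphMeasure
  rw [hd]
  have h := hP.hausdorffMeasure_image_le (d := (Fintype.card (Fin m) : ℝ)) (by positivity)
    (Metric.sphere (0 : EuclideanSpace ℝ (Fin (m+1))) 1)
  rw [hausdorffMeasure_pi_real] at h
  simp only [ENNReal.coe_one, ENNReal.one_rpow, one_mul] at h
  exact lt_of_lt_of_le (lt_of_lt_of_le hUpos (measure_mono hsub)) h

lemma diff_aux {E F : Type*} [NormedAddCommGroup E] [NormedSpace ℝ E] [NormedAddCommGroup F]
    [NormedSpace ℝ F] [FiniteDimensional ℝ F] (I : F → ℝ)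
    (hadd : ∀ a b, I (a + b) = I a + I b) (hsmul : ∀ (r : ℝ) a, I (r • a) = r * I a)
    (g : E → F) (x : E) (hg : DifferentiableAt ℝ g x) :
    DifferentiableAt ℝ (fun y => I (g y)) x := by
  let A : F →ₗ[ℝ] ℝ := { toFun := I, map_add' := hadd, map_smul' := hsmul }
  exact A.toContinuousLinearMap.differentiableAt.comp x hg

lemma diff_aux2 {E : Type*} [NormedAddCommGroup E] [NormedSpace ℝ E] [FiniteDimensional ℝ E]
    [MeasurableSpace E] (σ : Measure E) (c : E → ℝ)
    (hint : ∀ M : E →L[ℝ] E →L[ℝ] ℝ, Integrable (fun w => c w ^ 2 * M w w) σ)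
    (g : E → E →L[ℝ] E →L[ℝ] ℝ) (x : E) (hg : DifferentiableAt ℝ g x) :
    DifferentiableAt ℝ (fun y => ∫ w, c w ^ 2 * g y w w ∂σ) x := by
  refine diff_aux (fun M : E →L[ℝ] E →L[ℝ] ℝ => ∫ w, c w ^ 2 * M w w ∂σ) ?_ ?_ g x hg
  · intro M M'
    rw [← integral_add (hint M) (hint M')]
    congr 1
    ext w
    simp only [add_apply]
    ring
  · intro r M
    rw [← integral_const_mul]
    congr 1
    ext w
    simp only [smul_apply, smul_eq_mul]
    ring

lemma hessQF_eq {n : ℕ} (φ : EuclideanSpace ℝ (Fin n) → ℝ) (x v : EuclideanSpace ℝ (Fin n)) :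
    hessQF φ x v = fderiv ℝ (fderiv ℝ φ) x v v := by
  simp [hessQF, iteratedFDeriv_two_apply]

lemma inner_grad {n : ℕ} (g : EuclideanSpace ℝ (Fin n) → ℝ) (x v : EuclideanSpace ℝ (Fin n)) :
    ⟪v, gradient g x⟫_ℝ = fderiv ℝ g x v := by
  rw [real_inner_comm, gradient, InnerProductSpace.toDual_symm_apply]

/-- Lemma 3 of the paper, concrete form: the MNRE generator
`L^ε = ε⁻²Q + ε⁻¹c(θ)S(θ) + c₁(θ)S(θ)` applied to the perturbed test function `φ^ε` equals the
zero-order term `−c₁(v)⟨v,∇φ(x)⟩ + (1/N)∫c(w)²D²φ(x)[w,w]dσ(w)` plus remainders of orders `ε`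
and `ε²`. -/
theorem mnre_generator_on_perturbed_test_function (n : ℕ) (hn : 2 ≤ n)
    (c c₁ : EuclideanSpace ℝ (Fin n) → ℝ) (hc : Continuous c) (hc₁ : Continuous c₁)
    (hbal : ∫ w in Metric.sphere (0 : EuclideanSpace ℝ (Fin n)) 1,
      c w • w ∂(sphMeasure n) = 0)
    (φ : EuclideanSpace ℝ (Fin n) → ℝ) (hφ : ContDiff ℝ 3 φ)
    (x v : EuclideanSpace ℝ (Fin n))
    (hv : v ∈ Metric.sphere (0 : EuclideanSpace ℝ (Fin n)) 1)
    (ε : ℝ) (hε : ε ≠ 0) :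
    (ε ^ 2)⁻¹ * ((1 / sphN n) *
          (∫ w in Metric.sphere (0 : EuclideanSpace ℝ (Fin n)) 1,
            phiEpsN c ε φ x w ∂(sphMeasure n)) - phiEpsN c ε φ x v)
      - ε⁻¹ * c v * ⟪v, gradient (fun y => phiEpsN c ε φ y v) x⟫_ℝ
      - c₁ v * ⟪v, gradient (fun y => phiEpsN c ε φ y v) x⟫_ℝ =
    (-(c₁ v * ⟪v, gradient φ x⟫_ℝ) +
        (1 / sphN n) * ∫ w in Metric.sphere (0 : EuclideanSpace ℝ (Fin n)) 1,
          c w ^ 2 * hessQF φ x w ∂(sphMeasure n))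
      - ε * (c v * ⟪v, gradient (fun y => phi2 c φ y v) x⟫_ℝ
          - c₁ v * c v * hessQF φ x v)
      - ε ^ 2 * (c₁ v * ⟪v, gradient (fun y => phi2 c φ y v) x⟫_ℝ) := by
  obtain ⟨m, rfl⟩ : ∃ m, n = m + 1 := ⟨n - 1, by omega⟩
  have hfin := sph_finite m
  have hNpos : 0 < sphN (m+1) := ENNReal.toReal_pos (sph_pos m).ne' hfin.ne
  set S := Metric.sphere (0 : EuclideanSpace ℝ (Fin (m+1))) 1 with hS
  set σ := sphMeasure (m+1) with hσ
  have hScpt : IsCompact S := isCompact_sphere _ _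
  have : IsFiniteMeasure (σ.restrict S) := ⟨by simpa using hfin⟩
  have hint : ∀ g : EuclideanSpace ℝ (Fin (m+1)) → ℝ, Continuous g →
      IntegrableOn g S σ := by
    intro g hg
    obtain ⟨B, hB⟩ := hScpt.exists_bound_of_continuousOn hg.continuousOn
    refine Integrable.of_bound (C := B) hg.aestronglyMeasurable ?_
    exact (ae_restrict_iff' hScpt.measurableSet).2 (Filter.Eventually.of_forall hB)
  have hφd : Differentiable ℝ φ := hφ.differentiable (by norm_num)
  have hφ1 : ContDiff ℝ 2 (fderiv ℝ φ) := hφ.fderiv_right (by norm_num)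
  have hφ2 : ContDiff ℝ 1 (fderiv ℝ (fderiv ℝ φ)) := hφ1.fderiv_right (by norm_num)
  have hd1 : Differentiable ℝ (fderiv ℝ φ) := hφ1.differentiable (by norm_num)
  have hd2 : Differentiable ℝ (fderiv ℝ (fderiv ℝ φ)) := hφ2.differentiable (by norm_num)
  have hintM : ∀ M : EuclideanSpace ℝ (Fin (m+1)) →L[ℝ] EuclideanSpace ℝ (Fin (m+1)) →L[ℝ] ℝ,
      IntegrableOn (fun w => c w ^ 2 * M w w) S σ := by
    intro M
    apply hint
    fun_prop
  have hphi2d : DifferentiableAt ℝ (fun y => phi2 c φ y v) x := by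
    simp only [phi2, ← hS, ← hσ]
    simp only [hessQF_eq]
    have h2 := hd2 x
    have h3 := diff_aux2 (σ.restrict S) c hintM _ x h2
    have h4 : DifferentiableAt ℝ (fun y => fderiv ℝ (fderiv ℝ φ) y v v) x :=
      (h2.clm_apply (differentiableAt_const v)).clm_apply (differentiableAt_const v)
    exact (h4.const_mul _).sub (h3.const_mul _)
  have hphi1 : HasFDerivAt (fun y => phi1 c φ y v)
      (-(c v • (fderiv ℝ (fderiv ℝ φ) x).flip v)) x := by
    simp only [phi1, inner_grad]
    have h1 : HasFDerivAt (fun y => fderiv ℝ φ y v) ((fderiv ℝ (fderiv ℝ φ) x).flip v) x := by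
      have := (hd1 x).hasFDerivAt.clm_apply (hasFDerivAt_const v x)
      simpa using this
    exact (h1.const_mul (c v)).neg
  have hgrad : ⟪v, gradient (fun y => phiEpsN c ε φ y v) x⟫_ℝ =
      fderiv ℝ φ x v + ε * (-(c v * hessQF φ x v))
        + ε ^ 2 * fderiv ℝ (fun y => phi2 c φ y v) x v := by
    rw [inner_grad, hessQF_eq]
    have h := (((hφd x).hasFDerivAt.add (hphi1.const_mul ε)).add
      (hphi2d.hasFDerivAt.const_mul (ε ^ 2)))
    have h' : fderiv ℝ (fun y => phiEpsN c ε φ y v) x = _ := h.fderiv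
    rw [h']
    simp
  have hI1 : ∫ w in S, phi1 c φ x w ∂σ = 0 := by
    have hi : IntegrableOn (fun w => c w • w) S σ := by
      have hcont : Continuous (fun w : EuclideanSpace ℝ (Fin (m+1)) => c w • w) := by fun_prop
      obtain ⟨B, hB⟩ := hScpt.exists_bound_of_continuousOn hcont.continuousOn
      refine Integrable.of_bound (C := B) hcont.aestronglyMeasurable ?_
      exact (ae_restrict_iff' hScpt.measurableSet).2 (Filter.Eventually.of_forall hB)
    have h := (fderiv ℝ φ x).integral_comp_comm hi
    rw [hbal, map_zero] at h
    simp only [phi1, inner_grad]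
    rw [integral_neg, neg_eq_zero, ← h]
    simp
  have hi1 : IntegrableOn (fun w => phi1 c φ x w) S σ := by
    apply hint
    simp only [phi1]
    fun_prop
  have hiH : IntegrableOn (fun w => c w ^ 2 * hessQF φ x w) S σ := by
    simp only [hessQF_eq]
    exact hintM _
  have hvol : σ.real S = sphN (m+1) := rfl
  have hi2 : IntegrableOn (fun w => phi2 c φ x w) S σ := by
    exact hiH.sub (integrable_const _)
  have hI2 : ∫ w in S, phi2 c φ x w ∂σ = 0 := by
    simp only [phi2, ← hS, ← hσ]
    rw [integral_sub hiH (integrable_const _), setIntegral_const, hvol, smul_eq_mul]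
    field_simp
    ring
  have hI : ∫ w in S, phiEpsN c ε φ x w ∂σ = sphN (m+1) * φ x := by
    simp only [phiEpsN]
    have e0 : Integrable (fun _ : EuclideanSpace ℝ (Fin (m+1)) => φ x) (σ.restrict S) :=
      integrable_const _
    have e1 : Integrable (fun w => φ x + ε * phi1 c φ x w) (σ.restrict S) :=
      e0.add (hi1.const_mul ε)
    rw [integral_add e1 (hi2.const_mul _),
      integral_add e0 (hi1.const_mul ε), integral_const_mul, integral_const_mul, hI1, hI2,
      setIntegral_const, hvol, smul_eq_mul]
    ring
  rw [hI, hgrad, inner_grad, inner_grad]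
  generalize fderiv ℝ (fun y => phi2 c φ y v) x v = D2
  simp only [phiEpsN, phi1, phi2, ← hS, ← hσ, inner_grad]
  field_simp
  ring
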